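/- Let E be a real inner product space, let r_t : E → ℝ (for integers t, with r_s ≡ 0 for s ≤ 0) be differentiable functions with ‖∇r_t(θ)‖ ≤ M for all θ ∈ E and all t, where M > 0. Let b ≥ 2, T ≥ 1 be integers and c > 0, and set η = c·√(log b / (T·M⁴)). Let θ_1,…,θ_T ∈ E be arbitrary, write g_{t,j} = ∇r_{t−j}(θ_t) for j ∈ {0,1,…,b}, and define h_t : ℝ^b → ℝ by h_t(a) = ‖Σ_{j=1}^b a_j (g_{t,0} − g_{t,j})‖². Let φ_1 = (1/b,…,1/b) and φ_{t+1,i} = φ_{t,i} · exp(−η (∇h_t(φ_t))_i) / (Σ_{j} φ_{t,j} · exp(−η (∇h_t(φ_t))_j)). Then every φ_t lies in the simplex S_b, and for every probability vector φ ∈ S_b, Σ_{t=1}^T (h_t(φ_t) − h_t(φ)) ≤ (1/c + 32c) · M² · √(T · log b). -/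

import Mathlib

/-!
Write `v j = g₀ - g j`, so that `h a = ‖∑ j, a j • v j‖ ^ 2` has partial derivatives
`x i = 2 ⟪u, v i⟫`, where `u = ∑ j, a j • v j`. The proof is the potential argument for
multiplicative weights, with potential `D t = ∑ i, φstar i * log (φ t i)`.

* By convexity, `h a - h a'` is at most `∑ i, a i * x i - ∑ i, a' i * x i`
  (`norm_sq_sub_le_linear`).
* The centred partial derivative `x i - ∑ j, a j * x j` equals `2 ⟪u, (∑ k, a k • g k) - g i⟫`, and
  both vectors have norm at most `2 M`; it is therefore bounded by `8 M ^ 2`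
  (`abs_centred_partial_le`). Since it has mean zero under `a`, the symmetric estimate
  `cosh y ≤ exp (y ^ 2 / 2)` bounds the normalising factor of the update
  (`sum_mul_exp_le`); no Hoeffding bound for variables that are not centred is needed.
* Hence each update increases `D` by at least
  `η * (∑ i, φ t i * x i - ∑ i, φstar i * x i) - (8 M ^ 2 * η) ^ 2 / 2` (`potential_step`),
  while the total increase is at most `log b`, because `φ 1` is uniform and all weights are at
  most `1`.

Telescoping gives excess error at most `log b / η + 32 * η * M ^ 4 * T`, and the choice of `η` turns
this into the stated bound.
-/

/-- A weighted chord bound for the exponential: it lies below its chord on `[-G, G]`, so only the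
mean of `y` and the bound `G` enter. -/
lemma sum_mul_exp_centred_le {ι : Type*} [Fintype ι] (p y : ι → ℝ) (G : ℝ) (hG : 0 < G)
    (hp : ∀ i, 0 ≤ p i) (hp1 : ∑ i, p i = 1) (hy : ∀ i, |y i| ≤ G)
    (hmean : ∑ i, p i * y i = 0) :
    ∑ i, p i * Real.exp (y i) ≤ Real.exp (G ^ 2 / 2) := by
  have chord : ∀ i, Real.exp (y i) ≤ Real.cosh G + y i * (Real.sinh G / G) := by
    intro i
    obtain ⟨h1, h2⟩ := abs_le.mp (hy i)
    have hc := convexOn_exp.2 (Set.mem_univ (-G)) (Set.mem_univ G)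
      (show 0 ≤ (G - y i) / (2 * G) from div_nonneg (by linarith) (by linarith))
      (show 0 ≤ (G + y i) / (2 * G) from div_nonneg (by linarith) (by linarith))
      (by field_simp; ring)
    simp only [smul_eq_mul] at hc
    have e : (G - y i) / (2 * G) * -G + (G + y i) / (2 * G) * G = y i := by
      field_simp; ring
    rw [e] at hc
    refine hc.trans (le_of_eq ?_)
    rw [Real.cosh_eq, Real.sinh_eq]
    field_simp
    ring
  calc ∑ i, p i * Real.exp (y i)
      ≤ ∑ i, (p i * Real.cosh G + p i * y i * (Real.sinh G / G)) := by
        refine Finset.sum_le_sum fun i _ => ?_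
        have := mul_le_mul_of_nonneg_left (chord i) (hp i)
        linarith
    _ = Real.cosh G := by
        rw [Finset.sum_add_distrib, ← Finset.sum_mul, ← Finset.sum_mul, hp1, hmean]; ring
    _ ≤ Real.exp (G ^ 2 / 2) := Real.cosh_le_exp_half_sq G

lemma sum_mul_exp_le {ι : Type*} [Fintype ι] (p x : ι → ℝ) (G η : ℝ) (hG : 0 < G) (hη : 0 < η)
    (hp : ∀ i, 0 ≤ p i) (hp1 : ∑ i, p i = 1) (hx : ∀ i, |x i - ∑ j, p j * x j| ≤ G) :
    ∑ i, p i * Real.exp (-η * x i)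
      ≤ Real.exp (-η * ∑ j, p j * x j + (η * G) ^ 2 / 2) := by
  set m := ∑ j, p j * x j with hm
  have key := sum_mul_exp_centred_le p (fun i => -η * (x i - m)) (η * G) (by positivity) hp hp1
    (fun i => by
      rw [abs_mul, abs_neg, abs_of_pos hη]
      exact mul_le_mul_of_nonneg_left (hx i) hη.le)
    (by
      have : ∀ i, p i * (-η * (x i - m)) = -η * (p i * x i) + η * m * p i := fun i => by ring
      simp only [this]
      rw [Finset.sum_add_distrib, ← Finset.mul_sum, ← Finset.mul_sum, hp1, ← hm]; ring)
  have e : ∀ i, p i * Real.exp (-η * x i)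
      = Real.exp (-η * m) * (p i * Real.exp (-η * (x i - m))) := by
    intro i
    rw [mul_left_comm, ← Real.exp_add]
    congr 2; ring
  simp only [e]
  rw [← Finset.mul_sum, Real.exp_add]
  exact mul_le_mul_of_nonneg_left key (Real.exp_pos _).le

/-- One multiplicative update raises the potential `∑ i, q i * log (p i)` by at least the
linearised excess loss of `p` over `q`, up to a second-order error. -/
lemma potential_step {ι : Type*} [Fintype ι] (p p' q x : ι → ℝ) (G η : ℝ) (hG : 0 < G)
    (hη : 0 < η) (hp : ∀ i, 0 < p i) (hp1 : ∑ i, p i = 1)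
    (hx : ∀ i, |x i - ∑ j, p j * x j| ≤ G)
    (hZ : 0 < ∑ j, p j * Real.exp (-η * x j))
    (hp' : ∀ i, p' i = p i * Real.exp (-η * x i) / ∑ j, p j * Real.exp (-η * x j))
    (hq1 : ∑ i, q i = 1) :
    η * (∑ i, p i * x i - ∑ i, q i * x i)
      ≤ ∑ i, q i * Real.log (p' i) - ∑ i, q i * Real.log (p i) + (η * G) ^ 2 / 2 := by
  set Z := ∑ j, p j * Real.exp (-η * x j) with hZdef
  have hlog : Real.log Z ≤ -η * ∑ j, p j * x j + (η * G) ^ 2 / 2 := by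
    rw [Real.log_le_iff_le_exp hZ]
    exact sum_mul_exp_le p x G η hG hη (fun i => (hp i).le) hp1 hx
  have hl : ∀ i, q i * Real.log (p' i)
      = q i * Real.log (p i) - η * (q i * x i) - Real.log Z * q i := by
    intro i
    rw [hp' i, Real.log_div (mul_pos (hp i) (Real.exp_pos _)).ne' hZ.ne',
      Real.log_mul (hp i).ne' (Real.exp_pos _).ne', Real.log_exp]
    ring
  simp only [hl]
  rw [Finset.sum_sub_distrib, Finset.sum_sub_distrib, ← Finset.mul_sum, ← Finset.mul_sum, hq1]
  linarith

open scoped RealInnerProductSpace in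
lemma fderiv_norm_sq_sum_smul {ι E : Type*} [Fintype ι] [DecidableEq ι] [NormedAddCommGroup E]
    [InnerProductSpace ℝ E] (v : ι → E) (a : ι → ℝ) (i : ι) :
    fderiv ℝ (fun a : ι → ℝ => ‖∑ j, a j • v j‖ ^ 2) a (Pi.single i 1)
      = 2 * ⟪∑ j, a j • v j, v i⟫ := by
  let L : (ι → ℝ) →L[ℝ] E := ∑ j, (ContinuousLinearMap.proj j).smulRight (v j)
  have hL : ∀ a, L a = ∑ j, a j • v j := fun a => by simp [L]
  have hf : (fun a : ι → ℝ => ‖∑ j, a j • v j‖ ^ 2) = fun a => ‖L a‖ ^ 2 := by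
    funext a; rw [hL]
  have hi : L (Pi.single i 1) = v i := by
    rw [hL]; simp [Pi.single_apply]
  rw [hf, (L.hasFDerivAt (x := a)).norm_sq.fderiv]
  simp only [smul_apply, ContinuousLinearMap.comp_apply, innerSL_apply_apply,
    hi, hL, nsmul_eq_mul, Nat.cast_ofNat]

open scoped RealInnerProductSpace in
lemma norm_sq_sub_le_linear {ι E : Type*} [Fintype ι] [NormedAddCommGroup E]
    [InnerProductSpace ℝ E] (v : ι → E) (a q : ι → ℝ) :
    ‖∑ j, a j • v j‖ ^ 2 - ‖∑ j, q j • v j‖ ^ 2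
      ≤ ∑ i, a i * (2 * ⟪∑ j, a j • v j, v i⟫) - ∑ i, q i * (2 * ⟪∑ j, a j • v j, v i⟫) := by
  set u := ∑ j, a j • v j with hu
  have e : ∀ p : ι → ℝ, ∑ i, p i * (2 * ⟪u, v i⟫) = 2 * ⟪u, ∑ j, p j • v j⟫ := by
    intro p
    rw [inner_sum, Finset.mul_sum]
    refine Finset.sum_congr rfl fun i _ => ?_
    rw [real_inner_smul_right]; ring
  rw [e, e, ← hu, real_inner_self_eq_norm_sq]
  have := norm_sub_sq_real u (∑ j, q j • v j)
  nlinarith [sq_nonneg ‖u - ∑ j, q j • v j‖]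

lemma norm_sum_smul_le_of_simplex {ι E : Type*} [Fintype ι] [NormedAddCommGroup E]
    [NormedSpace ℝ E] (g : ι → E) (a : ι → ℝ) (M : ℝ) (ha : ∀ i, 0 ≤ a i)
    (ha1 : ∑ i, a i = 1) (hg : ∀ i, ‖g i‖ ≤ M) : ‖∑ j, a j • g j‖ ≤ M := by
  calc ‖∑ j, a j • g j‖ ≤ ∑ j, a j * M := by
        refine norm_sum_le_of_le _ fun j _ => ?_
        rw [norm_smul, Real.norm_of_nonneg (ha j)]
        exact mul_le_mul_of_nonneg_left (hg j) (ha j)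
    _ = M := by rw [← Finset.sum_mul, ha1, one_mul]

open scoped RealInnerProductSpace in
/-- The centred partial derivatives obey the same bound `8 * M ^ 2` as the partial derivatives
themselves: centring replaces `g₀ - g i` by `(∑ k, a k • g k) - g i`, again a difference of two
vectors of norm at most `M`. -/
lemma abs_centred_partial_le {ι E : Type*} [Fintype ι] [NormedAddCommGroup E]
    [InnerProductSpace ℝ E] (g₀ : E) (g : ι → E) (a : ι → ℝ) (M : ℝ)
    (ha : ∀ i, 0 ≤ a i) (ha1 : ∑ i, a i = 1) (hg₀ : ‖g₀‖ ≤ M) (hg : ∀ i, ‖g i‖ ≤ M) (i : ι) :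
    |2 * ⟪∑ j, a j • (g₀ - g j), g₀ - g i⟫
      - ∑ k, a k * (2 * ⟪∑ j, a j • (g₀ - g j), g₀ - g k⟫)| ≤ 8 * M ^ 2 := by
  set w := ∑ j, a j • g j with hw
  have hu : ∑ j, a j • (g₀ - g j) = g₀ - w := by
    simp only [smul_sub]
    rw [Finset.sum_sub_distrib, ← Finset.sum_smul, ha1, one_smul]
  have hwM : ‖w‖ ≤ M := norm_sum_smul_le_of_simplex g a M ha ha1 hg
  have hm : ∑ k, a k * (2 * ⟪g₀ - w, g₀ - g k⟫) = 2 * ⟪g₀ - w, g₀ - w⟫ := by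
    conv_rhs => rw [← hu, inner_sum, Finset.mul_sum, hu]
    refine Finset.sum_congr rfl fun k _ => ?_
    rw [real_inner_smul_right]; ring
  have h1 : ‖g₀ - w‖ ≤ 2 * M := (norm_sub_le _ _).trans (by linarith)
  have h2 : ‖w - g i‖ ≤ 2 * M := (norm_sub_le _ _).trans (by linarith [hg i])
  have e : 2 * ⟪g₀ - w, g₀ - g i⟫ - 2 * ⟪g₀ - w, g₀ - w⟫ = 2 * ⟪g₀ - w, w - g i⟫ := by
    rw [← mul_sub, ← inner_sub_right]; congr 2; abel
  rw [hu, hm, e, abs_mul, abs_two]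
  have h3 := abs_real_inner_le_norm (g₀ - w) (w - g i)
  have h4 := mul_le_mul h1 h2 (norm_nonneg _) ((norm_nonneg _).trans h1)
  nlinarith


/-- Explicit-constant form of equation (16) in the appendix: the exponentiated
gradient learner of the mixture weights of the linear gradient generator has at
most `(1/c + 32c)·M²·√(T log b)` excess squared forecast error over any fixed
mixture in the simplex.  Here `h_t(a) = ‖∑_{j=1}^b a_j (∇r_t(θ_t) − ∇r_{t−j}(θ_t))‖²`
and the `i`-th partial derivative of `h_t` at `a` is `fderiv ℝ (h t) a (Pi.single i 1)`. -/
theorem exponentiated_gradient_forecast_regret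
    {E : Type*} [NormedAddCommGroup E] [InnerProductSpace ℝ E] [CompleteSpace E]
    (r : ℤ → E → ℝ) (hrdiff : ∀ t : ℤ, Differentiable ℝ (r t))
    (hr0 : ∀ s : ℤ, s ≤ 0 → r s = 0)
    (M : ℝ) (hM : 0 < M)
    (hgrad : ∀ (t : ℤ) (x : E), ‖gradient (r t) x‖ ≤ M)
    (b T : ℕ) (hb : 2 ≤ b) (hT : 1 ≤ T)
    (c : ℝ) (hc : 0 < c)
    (η : ℝ) (hη : η = c * Real.sqrt (Real.log b / (T * M ^ 4)))
    (θ : ℕ → E)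
    (h : ℕ → (Fin b → ℝ) → ℝ)
    (hh : ∀ (t : ℕ) (a : Fin b → ℝ),
      h t a = ‖∑ j : Fin b,
        a j • (gradient (r t) (θ t)
                - gradient (r ((t : ℤ) - ((j : ℕ) + 1))) (θ t))‖ ^ 2)
    (φ : ℕ → Fin b → ℝ)
    (hinit : ∀ i, φ 1 i = 1 / (b : ℝ))
    (hstep : ∀ t ∈ Finset.Icc 1 T, ∀ i : Fin b,
      φ (t + 1) i
        = φ t i * Real.exp (-η * fderiv ℝ (h t) (φ t) (Pi.single i 1))
            / ∑ j, φ t j * Real.exp (-η * fderiv ℝ (h t) (φ t) (Pi.single j 1))) :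
    (∀ t ∈ Finset.Icc 1 T, (∀ i, 0 ≤ φ t i) ∧ (∑ i, φ t i) = 1) ∧
      ∀ φstar : Fin b → ℝ, (∀ i, 0 ≤ φstar i) → (∑ i, φstar i) = 1 →
        ∑ t ∈ Finset.Icc 1 T, (h t (φ t) - h t φstar)
          ≤ (1 / c + 32 * c) * M ^ 2 * Real.sqrt (T * Real.log b) := by
  classical
  have hbpos : (0 : ℝ) < b := by exact_mod_cast (by omega : 0 < b)
  have hTpos : (0 : ℝ) < T := by exact_mod_cast hT
  have hlogb : 0 < Real.log b := Real.log_pos (by exact_mod_cast (by omega : 1 < b))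
  have hηpos : 0 < η := by rw [hη]; positivity
  have : Nonempty (Fin b) := ⟨⟨0, by omega⟩⟩
  -- Strict positivity, which the logarithms in the potential need, is carried along.
  have hsimplex : ∀ t, t ≤ T → (∀ i, 0 < φ (t + 1) i) ∧ ∑ i, φ (t + 1) i = 1 := by
    intro t
    induction t with
    | zero =>
      intro _
      refine ⟨fun i => by rw [hinit]; positivity, ?_⟩
      simp only [zero_add, hinit]
      simp [hbpos.ne']
    | succ t ih =>
      intro ht
      obtain ⟨hp, -⟩ := ih (by omega)
      have hs := hstep (t + 1) (Finset.mem_Icc.mpr ⟨by omega, ht⟩)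
      have hZ : 0 < ∑ j, φ (t + 1) j
          * Real.exp (-η * fderiv ℝ (h (t + 1)) (φ (t + 1)) (Pi.single j 1)) :=
        Finset.sum_pos (fun j _ => mul_pos (hp j) (Real.exp_pos _)) Finset.univ_nonempty
      refine ⟨fun i => ?_, ?_⟩
      · rw [hs]
        exact div_pos (mul_pos (hp i) (Real.exp_pos _)) hZ
      · simp only [hs]
        rw [← Finset.sum_div, div_self hZ.ne']
  refine ⟨fun t ht => ?_, fun q hq hq1 => ?_⟩
  · obtain ⟨ht1, htT⟩ := Finset.mem_Icc.mp ht
    obtain ⟨s, rfl⟩ : ∃ s, t = s + 1 := ⟨t - 1, by omega⟩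
    obtain ⟨h1, h2⟩ := hsimplex s (by omega)
    exact ⟨fun i => (h1 i).le, h2⟩
  set D : ℕ → ℝ := fun t => ∑ i, q i * Real.log (φ t i) with hD
  have hround : ∀ s ∈ Finset.range T,
      η * (h (s + 1) (φ (s + 1)) - h (s + 1) q)
        ≤ D (s + 1 + 1) - D (s + 1) + (η * (8 * M ^ 2)) ^ 2 / 2 := by
    intro s hs
    have hs := Finset.mem_range.mp hs
    obtain ⟨hp, hp1⟩ := hsimplex s (by omega)
    set g₀ := gradient (r ((s + 1 : ℕ) : ℤ)) (θ (s + 1)) with hg₀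
    set g : Fin b → E := fun j =>
      gradient (r (((s + 1 : ℕ) : ℤ) - ((j : ℕ) + 1))) (θ (s + 1)) with hg
    have hfun : h (s + 1) = fun a => ‖∑ j, a j • (g₀ - g j)‖ ^ 2 := funext (hh (s + 1))
    have hx : ∀ i, fderiv ℝ (h (s + 1)) (φ (s + 1)) (Pi.single i 1)
        = 2 * inner ℝ (∑ j, φ (s + 1) j • (g₀ - g j)) (g₀ - g i) := fun i => by
      rw [hfun]; exact fderiv_norm_sq_sum_smul _ _ i
    have hstep' := hstep (s + 1) (Finset.mem_Icc.mpr ⟨by omega, by omega⟩)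
    simp only [hx] at hstep'
    have hpot := potential_step (φ (s + 1)) (φ (s + 1 + 1)) q _ (8 * M ^ 2) η (by positivity)
      hηpos hp hp1
      (abs_centred_partial_le g₀ g _ M (fun i => (hp i).le) hp1 (hgrad _ _) (fun i => hgrad _ _))
      (Finset.sum_pos (fun j _ => mul_pos (hp j) (Real.exp_pos _)) Finset.univ_nonempty)
      hstep' hq1
    refine le_trans (mul_le_mul_of_nonneg_left ?_ hηpos.le) hpot
    rw [hfun]
    exact norm_sq_sub_le_linear _ _ _
  have htotal := Finset.sum_le_sum hround
  rw [← Finset.mul_sum, Finset.sum_add_distrib,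
    Finset.sum_range_sub (fun s => D (s + 1)), Finset.sum_const, Finset.card_range,
    nsmul_eq_mul] at htotal
  have hDlast : D (T + 1) ≤ 0 := by
    obtain ⟨hp, hp1⟩ := hsimplex T le_rfl
    refine Finset.sum_nonpos fun i _ => mul_nonpos_of_nonneg_of_nonpos (hq i) ?_
    refine Real.log_nonpos (hp i).le ?_
    rw [← hp1]
    exact Finset.single_le_sum (fun j _ => (hp j).le) (Finset.mem_univ i)
  have hDfirst : D (0 + 1) = -Real.log b := by
    simp only [hD, zero_add, hinit, one_div, Real.log_inv]
    rw [← Finset.sum_mul, hq1, one_mul]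
  have hreindex : ∑ t ∈ Finset.Icc 1 T, (h t (φ t) - h t q)
      = ∑ s ∈ Finset.range T, (h (s + 1) (φ (s + 1)) - h (s + 1) q) := by
    rw [Finset.range_eq_Ico, Finset.sum_Ico_add' (fun t => h t (φ t) - h t q) 0 T 1]
    rfl
  rw [hreindex]
  -- With `S = √(T log b)`, the step size satisfies `η T M² = c S`, and `S² = T log b`; these two
  -- identities reduce the final comparison to algebra.
  set S := Real.sqrt (T * Real.log b) with hS
  have hS2 : S ^ 2 = T * Real.log b := Real.sq_sqrt (by positivity)
  have hηS : η = c * S / (T * M ^ 2) := by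
    have : Real.log b / (T * M ^ 4) = (T * Real.log b) / (T * M ^ 2) ^ 2 := by
      field_simp
    rw [hη, this, Real.sqrt_div (by positivity), Real.sqrt_sq (by positivity), ← hS]
    ring
  have hfinal : η * ((1 / c + 32 * c) * M ^ 2 * S)
      = Real.log b + T * ((η * (8 * M ^ 2)) ^ 2 / 2) := by
    have hl : Real.log b = S ^ 2 / T := by rw [hS2]; field_simp
    rw [hl, hηS]
    field_simp
    ring
  refine le_of_mul_le_mul_left ?_ hηpos
  rw [hfinal]
  linarith
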